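/- Let N ≥ 1, d ≥ 0, and let c : ({0,1,…,d})^N → ℂ be an arbitrary coefficient tensor. Then there exist natural numbers D_0 = D_N = 1 and D_1, …, D_{N−1} with D_k ≤ (d+1)^{min(k, N−k)} (in particular D_k ≤ (d+1)^{⌊N/2⌋}), together with matrices B^{[k]}_{n} ∈ M_{D_{k−1}×D_k}(ℂ) for each site k ∈ {1,…,N} and each index n ∈ {0,1,…,d}, such that for all (n_1,…,n_N), c(n_1,…,n_N) = B^{[1]}_{n_1} B^{[2]}_{n_2} ⋯ B^{[N]}_{n_N} (the right-hand side being a 1×1 matrix identified with its unique entry). That is, every state in (ℂ^{d+1})^{⊗N} admits a matrix product state representation with bond dimensions at most (d+1)^{⌊N/2⌋}. -/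

import Mathlib

/-- Left-to-right contraction of a chain of matrices: `mpsProd D M m` is the
product `M 0 * M 1 * ⋯ * M (m-1)` (a `D 0 × D m` matrix). -/
noncomputable def mpsProd (D : ℕ → ℕ)
    (M : ∀ k : ℕ, Matrix (Fin (D k)) (Fin (D (k + 1))) ℂ) :
    ∀ m : ℕ, Matrix (Fin (D 0)) (Fin (D m)) ℂ
  | 0 => 1
  | m + 1 => mpsProd D M m * M m

/-!
Cut the chain at every bond and let the bond remember the configuration on the smaller side of the
cut. Up to a centre site `h` this is the part to the left of the bond, after it the part to the
right. A site matrix away from `h` is the 0/1 relation "some configuration restricts to this row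
label, this physical index and this column label". Left of `h` the row label and the physical index
force the column label, right of `h` the column label and the physical index force the row label,
so in the matrix product a single path of labels survives. Its weight is the entry at `h`, where
the two labels and the physical index determine the whole configuration, so that the entry may be
taken to be the coefficient itself.
-/

open Function Matrix

section ChainProd

variable {R : Type*} [Semiring R]

/-- Left-to-right contraction `M 0 * M 1 * ⋯ * M (m - 1)` of a chain of matrices, as `mpsProd` but
over any semiring and with arbitrary finite index types at the bonds. -/
def chainProd {ι : ℕ → Type*} [∀ k, Fintype (ι k)] [DecidableEq (ι 0)]
    (M : ∀ k, Matrix (ι k) (ι (k + 1)) R) : ∀ m, Matrix (ι 0) (ι m) R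
  | 0 => 1
  | m + 1 => chainProd M m * M m

theorem mpsProd_eq_chainProd (D : ℕ → ℕ) (M : ∀ k, Matrix (Fin (D k)) (Fin (D (k + 1))) ℂ)
    (m : ℕ) : mpsProd D M m = chainProd M m := by
  induction m with
  | zero => rfl
  | succ m ih => rw [mpsProd, chainProd, ih]

variable {ι : ℕ → Type*} [∀ k, Fintype (ι k)] [∀ k, DecidableEq (ι k)]
  {M : ∀ k, Matrix (ι k) (ι (k + 1)) R} {p : ∀ k, ι k} {h N : ℕ}

theorem chainProd_row_eq_single
    (hrow : ∀ k < h, (M k).row (p k) = Pi.single (p (k + 1)) 1) :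
    (chainProd M h).row (p 0) = Pi.single (p h) 1 := by
  induction h with
  | zero => exact funext fun _ => Matrix.one_eq_pi_single
  | succ m ih =>
    calc (chainProd M (m + 1)).row (p 0)
        = (chainProd M m).row (p 0) ᵥ* M m := mul_apply_eq_vecMul _ _ _
      _ = (M m).row (p m) := by rw [ih fun k hk => hrow k (by lia), single_one_vecMul]
      _ = Pi.single (p (m + 1)) 1 := hrow m m.lt_succ_self

theorem chainProd_apply_of_forced (hN : h < N)
    (hrow : ∀ k < h, (M k).row (p k) = Pi.single (p (k + 1)) 1)
    (hcol : ∀ k, h < k → k < N → (M k).col (p (k + 1)) = Pi.single (p k) 1) :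
    chainProd M N (p 0) (p N) = M h (p h) (p (h + 1)) := by
  induction N, hN using Nat.le_induction with
  | base =>
    calc chainProd M (h + 1) (p 0) (p (h + 1))
        = ((chainProd M h).row (p 0) ᵥ* M h) (p (h + 1)) := rfl
      _ = M h (p h) (p (h + 1)) := by
        rw [chainProd_row_eq_single hrow, single_one_vecMul, row_apply]
  | succ m hm ih =>
    calc chainProd M (m + 1) (p 0) (p (m + 1))
        = (chainProd M m *ᵥ (M m).col (p (m + 1))) (p 0) := rfl
      _ = chainProd M m (p 0) (p m) := by
        rw [hcol m hm m.lt_succ_self, mulVec_single_one, col_apply]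
      _ = M h (p h) (p (h + 1)) := ih fun k hk hkm => hcol k hk (by lia)

end ChainProd

section SiteTensor

variable {R Ω α β σ : Type*} [Zero R]

/-- The matrices of one site, built from a row label `f`, a physical index `x` and a column label
`g` of the configurations `ω : Ω`: the entry at `(f ω, g ω)` of the matrix for `x ω` is `w ω`,
and the entries that belong to no configuration are `0`. Where `(f, x, g)` does not determine `w`,
the value at an arbitrary admissible `ω` is taken. -/
noncomputable def siteTensor (f : Ω → α) (x : Ω → σ) (g : Ω → β) (w : Ω → R) (s : σ) :
    Matrix α β R :=
  of fun a b => extend (fun ω => (f ω, x ω, g ω)) w 0 (a, s, b)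

variable {f : Ω → α} {x : Ω → σ} {g : Ω → β}

theorem siteTensor_apply_of_factorsThrough {w : Ω → R}
    (hw : w.FactorsThrough fun ω => (f ω, x ω, g ω)) (ω : Ω) :
    siteTensor f x g w (x ω) (f ω) (g ω) = w ω :=
  hw.extend_apply 0 ω

theorem siteTensor_apply_eq_zero {w : Ω → R} {a : α} {s : σ} {b : β}
    (hab : ∀ ω, f ω = a → x ω = s → g ω ≠ b) : siteTensor f x g w s a b = 0 :=
  extend_apply' _ _ _ fun ⟨ω, hω⟩ => by
    simp only [Prod.mk.injEq] at hω
    exact hab ω hω.1 hω.2.1 hω.2.2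

variable [One R]

theorem siteTensor_one_row [DecidableEq β] (hg : g.FactorsThrough fun ω => (f ω, x ω)) (ω : Ω) :
    (siteTensor f x g (1 : Ω → R) (x ω)).row (f ω) = Pi.single (g ω) 1 := by
  ext b
  rw [row_apply]
  obtain rfl | hb := eq_or_ne b (g ω)
  · rw [Pi.single_eq_same, siteTensor_apply_of_factorsThrough fun _ _ _ => rfl, Pi.one_apply]
  · rw [Pi.single_eq_of_ne hb]
    exact siteTensor_apply_eq_zero fun ω' hf hx hgb => hb (hgb ▸ hg (Prod.ext hf hx))

theorem siteTensor_one_col [DecidableEq α] (hf : f.FactorsThrough fun ω => (x ω, g ω)) (ω : Ω) :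
    (siteTensor f x g (1 : Ω → R) (x ω)).col (g ω) = Pi.single (f ω) 1 := by
  ext a
  rw [col_apply]
  obtain rfl | ha := eq_or_ne a (f ω)
  · rw [Pi.single_eq_same, siteTensor_apply_of_factorsThrough fun _ _ _ => rfl, Pi.one_apply]
  · rw [Pi.single_eq_of_ne ha]
    exact siteTensor_apply_eq_zero fun ω' hfa hx hg => ha (hfa ▸ hf (Prod.ext hx hg))

end SiteTensor

theorem chainProd_siteTensor {R Ω : Type*} [Semiring R] {N : ℕ} {σ : Fin N → Type*}
    {ι : ℕ → Type*} [∀ k, Fintype (ι k)] [∀ k, DecidableEq (ι k)]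
    {x : ∀ k, Ω → σ k} {f : ∀ k, Ω → ι k} (h : Fin N)
    (hleft : ∀ k < h, (f (k + 1)).FactorsThrough fun ω => (f k ω, x k ω))
    (hright : ∀ k > h, (f k).FactorsThrough fun ω => (x k ω, f (k + 1) ω))
    (hcenter : Injective fun ω => (f h ω, x h ω, f (h + 1) ω)) (c : Ω → R) (ω : Ω) :
    chainProd (fun m => if hm : m < N then
        siteTensor (f m) (x ⟨m, hm⟩) (f (m + 1)) (if m = h then c else 1) (x ⟨m, hm⟩ ω)
      else 0) N (f 0 ω) (f N ω) = c ω := by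
  rw [chainProd_apply_of_forced (p := fun k => f k ω) h.isLt]
  · simp only [dif_pos h.isLt, if_pos, Fin.eta]
    exact siteTensor_apply_of_factorsThrough (hcenter.factorsThrough c) ω
  · intro k hk
    simp only [dif_pos (hk.trans h.isLt), if_neg hk.ne]
    exact siteTensor_one_row (hleft ⟨k, _⟩ hk) ω
  · intro k hk hkN
    simp only [dif_pos hkN, if_neg hk.ne']
    exact siteTensor_one_col (hright ⟨k, hkN⟩ hk) ω

theorem exists_label_of_prod_card_le {I : Type*} {σ : I → Type*} [∀ i, Fintype (σ i)]
    {S : Finset I} {D : ℕ} (hD : ∏ i ∈ S, Fintype.card (σ i) ≤ D) :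
    ∃ f : (∀ i, σ i) → Fin D, ∀ n n', f n = f n' ↔ ∀ i ∈ S, n i = n' i := by
  classical
  have hcard : Fintype.card (∀ i : S, σ i) ≤ Fintype.card (Fin D) := by
    rwa [Fintype.card_pi, Fintype.card_fin, Finset.prod_coe_sort S fun i => Fintype.card (σ i)]
  obtain ⟨e⟩ := Embedding.nonempty_of_card_le hcard
  refine ⟨fun n => e (S.restrict n), fun n n' => ?_⟩
  simp only [e.injective.eq_iff, funext_iff, Finset.restrict_def, Subtype.forall]

theorem exists_crossing {α : Type*} [LinearOrder α] {L R : ℕ → α} (hL : Monotone L)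
    (hR : Antitone R) {N : ℕ} (hN : N ≠ 0) (h0 : L 0 ≤ R 0) (hend : R N ≤ L N) :
    ∃ h : Fin N, (∀ k ≤ (h : ℕ), L k ≤ R k) ∧ ∀ k > (h : ℕ), R k ≤ L k := by
  have hex : ∃ k, R (k + 1) ≤ L (k + 1) := ⟨N - 1, by rwa [Nat.sub_one_add_one hN]⟩
  have hlt : Nat.find hex < N := by
    have : Nat.find hex ≤ N - 1 := Nat.find_min' hex (by rwa [Nat.sub_one_add_one hN])
    lia
  refine ⟨⟨Nat.find hex, hlt⟩, fun k hk => ?_, fun k hk => ?_⟩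
  · cases k with
    | zero => exact h0
    | succ k => exact (not_le.1 (Nat.find_min hex hk)).le
  · exact (hR hk).trans ((Nat.find_spec hex).trans (hL hk))

section BondDim

variable {N : ℕ}

/-- The sites `0, …, k - 1` of a chain of `N` sites, that is, those to the left of bond `k`. -/
def leftSites (N k : ℕ) : Finset (Fin N) := {i | i.val < k}

theorem mem_leftSites {k : ℕ} {i : Fin N} : i ∈ leftSites N k ↔ i.val < k := by
  simp only [leftSites, Finset.mem_filter_univ]

theorem leftSites_mono : Monotone (leftSites N) := fun _ _ hkl _ hi =>
  mem_leftSites.2 ((mem_leftSites.1 hi).trans_le hkl)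

/-- The sites whose configuration is recorded by the label of bond `k`, when the coefficients sit at
site `h`: those on the side of the bond that does not contain `h`. -/
def carriedSites (h : Fin N) (k : ℕ) : Finset (Fin N) :=
  if k ≤ h then leftSites N k else (leftSites N k)ᶜ

theorem mem_carriedSites {h i : Fin N} {k : ℕ} :
    i ∈ carriedSites h k ↔ if k ≤ h then i.val < k else k ≤ i := by
  unfold carriedSites
  split_ifs <;> simp only [Finset.mem_compl, mem_leftSites, not_lt]

theorem mem_carriedSites_or_eq_of_lt {h k i : Fin N} (hk : k < h)
    (hi : i ∈ carriedSites h (k + 1)) : i ∈ carriedSites h k ∨ i = k := by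
  grind [mem_carriedSites]

theorem eq_or_mem_carriedSites_of_gt {h k i : Fin N} (hk : h < k)
    (hi : i ∈ carriedSites h k) : i = k ∨ i ∈ carriedSites h (k + 1) := by
  grind [mem_carriedSites]

theorem mem_carriedSites_or_eq_or_mem (h i : Fin N) :
    i ∈ carriedSites h h ∨ i = h ∨ i ∈ carriedSites h (h + 1) := by
  grind [mem_carriedSites]

variable (σ : Fin N → Type*) [∀ i, Fintype (σ i)]

/-- The number of configurations of the sites to the left of bond `k`. -/
def leftDim (k : ℕ) : ℕ := ∏ i ∈ leftSites N k, Fintype.card (σ i)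

/-- The number of configurations of the sites to the right of bond `k`. -/
def rightDim (k : ℕ) : ℕ := ∏ i ∈ (leftSites N k)ᶜ, Fintype.card (σ i)

/-- The number of configurations of the smaller side of bond `k`, which is the maximal Schmidt rank
of a tensor across the cut at `k`. -/
def bondDim (k : ℕ) : ℕ := min (leftDim σ k) (rightDim σ k)

theorem leftDim_zero : leftDim σ 0 = 1 := by simp [leftDim, leftSites]

theorem rightDim_last : rightDim σ N = 1 := by simp [rightDim, leftSites]

theorem bondDim_const (α : Type*) [Fintype α] [Nonempty α] {k : ℕ} (hk : k ≤ N) :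
    bondDim (fun _ : Fin N => α) k = Fintype.card α ^ min k (N - k) := by
  have hcard : (leftSites N k).card = k := by
    rw [leftSites, Fin.card_filter_val_lt, min_eq_right hk]
  rw [bondDim, leftDim, rightDim, Finset.prod_const, Finset.prod_const, Finset.card_compl,
    hcard, Fintype.card_fin, (pow_right_mono₀ Fintype.card_pos).map_min]

variable [∀ i, Nonempty (σ i)]

theorem leftDim_mono : Monotone (leftDim σ) := fun _ _ hkl =>
  Finset.prod_le_prod_of_subset_of_one_le' (leftSites_mono hkl) fun _ _ _ => Fintype.card_pos

theorem rightDim_anti : Antitone (rightDim σ) := fun _ _ hkl =>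
  Finset.prod_le_prod_of_subset_of_one_le' (Finset.compl_subset_compl.2 (leftSites_mono hkl))
    fun _ _ _ => Fintype.card_pos

theorem one_le_leftDim (k : ℕ) : 1 ≤ leftDim σ k := Finset.one_le_prod' fun _ _ => Fintype.card_pos

theorem one_le_rightDim (k : ℕ) : 1 ≤ rightDim σ k :=
  Finset.one_le_prod' fun _ _ => Fintype.card_pos

theorem bondDim_zero : bondDim σ 0 = 1 := by
  rw [bondDim, leftDim_zero, min_eq_left (one_le_rightDim σ 0)]

theorem bondDim_last : bondDim σ N = 1 := by
  rw [bondDim, rightDim_last, min_eq_right (one_le_leftDim σ N)]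

theorem exists_center (hN : N ≠ 0) :
    ∃ h : Fin N, (∀ k ≤ h.val, bondDim σ k = leftDim σ k) ∧
      ∀ k > h.val, bondDim σ k = rightDim σ k := by
  obtain ⟨h, hle, hge⟩ := exists_crossing (leftDim_mono σ) (rightDim_anti σ) hN
    (leftDim_zero σ ▸ one_le_rightDim σ 0) (rightDim_last σ ▸ one_le_leftDim σ N)
  exact ⟨h, fun k hk => min_eq_left (hle k hk), fun k hk => min_eq_right (hge k hk)⟩

theorem exists_bond_labels (hN : N ≠ 0) :
    ∃ (h : Fin N) (f : ∀ k, (∀ i, σ i) → Fin (bondDim σ k)),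
      (∀ k < h, (f (k + 1)).FactorsThrough fun n => (f k n, n k)) ∧
      (∀ k > h, (f k).FactorsThrough fun n => (n k, f (k + 1) n)) ∧
      Injective fun n => (f h n, n h, f (h + 1) n) := by
  obtain ⟨h, hle, hgt⟩ := exists_center σ hN
  have hcard (k : ℕ) : ∏ i ∈ carriedSites h k, Fintype.card (σ i) ≤ bondDim σ k := by
    by_cases hk : k ≤ h
    · simpa only [carriedSites, if_pos hk, leftDim] using (hle k hk).ge
    · simpa only [carriedSites, if_neg hk, rightDim] using (hgt k (not_le.1 hk)).ge
  choose f hf using fun k => exists_label_of_prod_card_le (hcard k)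
  refine ⟨h, f, fun k hk n n' hnn => ?_, fun k hk n n' hnn => ?_, fun n n' hnn => ?_⟩ <;>
    simp only [Prod.mk.injEq, hf] at hnn ⊢
  · obtain ⟨hk_agree, hn⟩ := hnn
    intro i hi
    obtain hi | rfl := mem_carriedSites_or_eq_of_lt hk hi
    exacts [hk_agree i hi, hn]
  · obtain ⟨hn, hsucc_agree⟩ := hnn
    intro i hi
    obtain rfl | hi := eq_or_mem_carriedSites_of_gt hk hi
    exacts [hn, hsucc_agree i hi]
  · obtain ⟨hleft_agree, hn, hright_agree⟩ := hnn
    funext i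
    obtain hi | rfl | hi := mem_carriedSites_or_eq_or_mem h i
    exacts [hleft_agree i hi, hn, hright_agree i hi]

end BondDim

theorem exists_mps_representation_general {R : Type*} [Semiring R] {N : ℕ} (hN : 1 ≤ N)
    {σ : Fin N → Type*} [∀ i, Fintype (σ i)] [∀ i, Nonempty (σ i)] (c : (∀ i, σ i) → R) :
    ∃ D : ℕ → ℕ, D 0 = 1 ∧ D N = 1 ∧ (∀ k ≤ N, D k ≤ bondDim σ k) ∧
      ∃ B : ∀ k : Fin N, σ k → Matrix (Fin (D k)) (Fin (D (k + 1))) R,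
        ∀ (n : ∀ i, σ i) (i : Fin (D 0)) (j : Fin (D N)),
          chainProd (ι := fun k => Fin (D k))
            (fun m => if h : m < N then B ⟨m, h⟩ (n ⟨m, h⟩) else 0) N i j = c n := by
  obtain ⟨h, f, hleft, hright, hcenter⟩ := exists_bond_labels σ (Nat.one_le_iff_ne_zero.1 hN)
  refine ⟨bondDim σ, bondDim_zero σ, bondDim_last σ, fun _ _ => le_rfl,
    fun k => siteTensor (f k) (eval k) (f (k + 1)) (if k.val = h then c else 1), fun n i j => ?_⟩
  have : Subsingleton (Fin (bondDim σ 0)) := Fin.subsingleton_iff_le_one.2 (bondDim_zero σ).le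
  have : Subsingleton (Fin (bondDim σ N)) := Fin.subsingleton_iff_le_one.2 (bondDim_last σ).le
  rw [Subsingleton.elim i (f 0 n), Subsingleton.elim j (f N n)]
  exact chainProd_siteTensor (x := eval) h hleft hright hcenter c n

/-- Every coefficient tensor `c : {0,…,d}^N → ℂ` admits a matrix product state
representation with bond dimensions `D k ≤ (d+1)^{min(k, N−k)}`
(in particular `≤ (d+1)^{⌊N/2⌋}`). -/
theorem exists_mps_representation (N d : ℕ) (hN : 1 ≤ N)
    (c : (Fin N → Fin (d + 1)) → ℂ) :
    ∃ D : ℕ → ℕ, D 0 = 1 ∧ D N = 1 ∧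
      (∀ k ≤ N, D k ≤ (d + 1) ^ min k (N - k)) ∧
      ∃ B : ∀ k : Fin N, Fin (d + 1) → Matrix (Fin (D (k : ℕ))) (Fin (D ((k : ℕ) + 1))) ℂ,
        ∀ n : Fin N → Fin (d + 1), ∀ i : Fin (D 0), ∀ j : Fin (D N),
          mpsProd D (fun m => if h : m < N then B ⟨m, h⟩ (n ⟨m, h⟩) else 0) N i j = c n := by
  obtain ⟨D, hD0, hDN, hD, B, hB⟩ := exists_mps_representation_general hN c
  refine ⟨D, hD0, hDN, fun k hk => (hD k hk).trans_eq ?_, B, fun n i j => ?_⟩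
  · rw [bondDim_const _ hk, Fintype.card_fin]
  · rw [mpsProd_eq_chainProd, hB]
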